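/- arXiv:2602.23970 — 2 statements merged into one kernel-verified Lean document; each statement's English description precedes it below -/
import Mathlib

section
/- Let w be a weight on ℕ. Then the w-adjacency operator A_w is self-adjoint and its operator norm satisfies ‖A_w‖ = |w|. -/
noncomputable section

/-- The Hilbert space `𝔥 = ℓ²(Γ)` with `Γ = Finset ℕ`. -/
abbrev H : Type := lp (fun _ : Finset ℕ => ℂ) 2

/-- The canonical orthonormal basis vector `Z_σ`. -/
noncomputable def Z (σ : Finset ℕ) : H := lp.single 2 σ (1 : ℂ)

/-!
Each `Ξ_k` permutes an orthonormal basis by an involution, so it is a self-adjoint unitary; hence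
`A_w` is self-adjoint and `‖A_w‖ ≤ ∑ |w_k|`. For the reverse inequality, choose signs `ε_k` with
`ε_k w_k = |w_k|` and, for a finite set `s`, put `v = ∑_{σ ⊆ s} (∏_{i ∈ σ} ε_i) Z_σ`. This is
`(∏_{k ∈ s} (1 + ε_k Ξ_k)) Z_∅`, so `Ξ_k v = ε_k v` for `k ∈ s`, and the partial sum of `A_w`
over `s` has the eigenvalue `∑_{k ∈ s} |w_k|`.
-/

section BasisPermutation

variable {𝕜 E Γ : Type*} [RCLike 𝕜] [NormedAddCommGroup E] [InnerProductSpace 𝕜 E]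

theorem continuousLinearMap_ext_hilbertBasis {F : Type*} [TopologicalSpace F] [T2Space F]
    [AddCommMonoid F] [Module 𝕜 F] (b : HilbertBasis Γ 𝕜 E) {S T : E →L[𝕜] F}
    (h : ∀ i, S (b i) = T (b i)) : S = T :=
  ContinuousLinearMap.ext_on (Submodule.dense_iff_topologicalClosure_eq_top.2 b.dense_span)
    (Set.forall_mem_range.2 h)

variable {b : HilbertBasis Γ 𝕜 E} {e : Γ → Γ} {T : E →L[𝕜] E}

theorem mul_self_eq_one_of_involutive_on_basis (he : e.Involutive) (hT : ∀ i, T (b i) = b (e i)) :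
    T * T = 1 := by
  refine continuousLinearMap_ext_hilbertBasis b fun i => ?_
  simp [hT, he i]

variable [CompleteSpace E]

theorem isSelfAdjoint_of_involutive_on_basis (he : e.Involutive) (hT : ∀ i, T (b i) = b (e i)) :
    IsSelfAdjoint T := by
  classical
  refine continuousLinearMap_ext_hilbertBasis b fun i => ?_
  refine b.repr.injective (lp.ext (funext fun j => ?_))
  simp only [b.repr_apply_apply, ContinuousLinearMap.star_eq_adjoint,
    ContinuousLinearMap.adjoint_inner_right, hT, orthonormal_iff_ite.1 b.orthonormal,
    he.eq_iff]

theorem norm_le_one_of_involutive_on_basis (he : e.Involutive) (hT : ∀ i, T (b i) = b (e i)) :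
    ‖T‖ ≤ 1 := by
  have hT_unitary : T ∈ unitary (E →L[𝕜] E) := by
    simp [Unitary.mem_iff, (isSelfAdjoint_of_involutive_on_basis he hT).star_eq,
      mul_self_eq_one_of_involutive_on_basis he hT]
  refine T.opNorm_le_bound zero_le_one fun x => ?_
  rw [T.norm_map_of_mem_unitary hT_unitary, one_mul]

end BasisPermutation

theorem norm_le_opNorm_of_apply_eq_smul {𝕜 E : Type*} [NontriviallyNormedField 𝕜]
    [NormedAddCommGroup E] [NormedSpace 𝕜 E] {T : E →L[𝕜] E} {c : 𝕜} {v : E} (hv : v ≠ 0)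
    (hTv : T v = c • v) : ‖c‖ ≤ ‖T‖ := by
  refine le_of_mul_le_mul_right ?_ (norm_pos_iff.2 hv)
  calc ‖c‖ * ‖v‖ = ‖T v‖ := by rw [hTv, norm_smul]
    _ ≤ ‖T‖ * ‖v‖ := T.le_opNorm v

section SubsetCharacterSum

variable {ι : Type*}

/-- The vector `∑_{σ ⊆ s} (∏_{i ∈ σ} ε i) • b σ`. When `ε` takes values in square roots of `1`,
the coefficients form a character of the group of finite sets under symmetric difference. -/
def subsetCharacterSum {R M : Type*} [CommSemiring R] [AddCommMonoid M] [Module R M]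
    (b : Finset ι → M) (ε : ι → R) (s : Finset ι) : M :=
  ∑ σ ∈ s.powerset, (∏ i ∈ σ, ε i) • b σ

theorem subsetCharacterSum_ne_zero {R M : Type*} [CommRing R] [Nontrivial R] [AddCommGroup M]
    [Module R M] {b : Finset ι → M} (hb : LinearIndependent R b) (ε : ι → R) (s : Finset ι) :
    subsetCharacterSum b ε s ≠ 0 := fun h => by
  have empty_coeff : ∏ i ∈ (∅ : Finset ι), ε i = 0 :=
    linearIndependent_iff'.1 hb s.powerset _ h ∅ (Finset.empty_mem_powerset s)
  simp at empty_coeff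

variable [DecidableEq ι]

theorem prod_symmDiff_singleton {M : Type*} [CommMonoid M] {ε : ι → M} {k : ι}
    (hε : ε k * ε k = 1) (σ : Finset ι) :
    ∏ i ∈ symmDiff σ {k}, ε i = ε k * ∏ i ∈ σ, ε i := by
  by_cases hk : k ∈ σ
  · have : symmDiff σ {k} = σ.erase k := by grind [Finset.mem_symmDiff]
    rw [this, ← Finset.mul_prod_erase σ ε hk, ← mul_assoc, hε, one_mul]
  · have : symmDiff σ {k} = insert k σ := by grind [Finset.mem_symmDiff]
    rw [this, Finset.prod_insert hk]

theorem symmDiff_singleton_subset_iff {s : Finset ι} {k : ι} (hk : k ∈ s) (σ : Finset ι) :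
    symmDiff σ {k} ⊆ s ↔ σ ⊆ s := by
  grind [Finset.mem_symmDiff]

theorem map_subsetCharacterSum {R M : Type*} [CommSemiring R] [AddCommMonoid M] [Module R M]
    {b : Finset ι → M} {ε : ι → R} {s : Finset ι} {k : ι} {T : M →ₗ[R] M} (hk : k ∈ s)
    (hε : ε k * ε k = 1) (hT : ∀ σ, T (b σ) = b (symmDiff σ {k})) :
    T (subsetCharacterSum b ε s) = ε k • subsetCharacterSum b ε s := by
  have flip_involutive : Function.Involutive fun σ : Finset ι => symmDiff σ {k} :=
    symmDiff_left_involutive {k}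
  calc T (subsetCharacterSum b ε s)
      = ∑ σ ∈ s.powerset, (∏ i ∈ σ, ε i) • b (symmDiff σ {k}) := by
        simp [subsetCharacterSum, hT]
    _ = ∑ σ ∈ s.powerset, (∏ i ∈ symmDiff σ {k}, ε i) • b σ :=
        Finset.sum_equiv flip_involutive.toPerm (by simp [symmDiff_singleton_subset_iff hk])
          fun σ _ => by simp [flip_involutive σ]
    _ = ε k • subsetCharacterSum b ε s := by
        simp only [prod_symmDiff_singleton hε, mul_smul, subsetCharacterSum, Finset.smul_sum]

end SubsetCharacterSum

theorem exists_mul_self_eq_one_and_mul_eq_abs {R : Type*} [Ring R] [LinearOrder R] (x : R) :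
    ∃ ε : R, ε * ε = 1 ∧ x * ε = |x| := by
  rcases abs_choice x with h | h
  · exact ⟨1, by simp [h]⟩
  · exact ⟨-1, by simp [h]⟩

section Adjacency

variable {ι 𝕜 E : Type*} [DecidableEq ι] [RCLike 𝕜] [NormedAddCommGroup E]

theorem sum_abs_le_norm_sum_adjacency [NormedSpace 𝕜 E] {b : Finset ι → E}
    (hb : LinearIndependent 𝕜 b) {Xi : ι → E →L[𝕜] E}
    (hXi : ∀ k σ, Xi k (b σ) = b (symmDiff σ {k})) (w : ι → ℝ) (s : Finset ι) :
    ∑ k ∈ s, |w k| ≤ ‖∑ k ∈ s, (w k : 𝕜) • Xi k‖ := by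
  choose ε hε hwε using fun k => exists_mul_self_eq_one_and_mul_eq_abs (w k)
  set v : E := subsetCharacterSum b (fun k => (ε k : 𝕜)) s
  have Xi_apply : ∀ k ∈ s, Xi k v = (ε k : 𝕜) • v := fun k hk =>
    map_subsetCharacterSum (T := (Xi k : E →ₗ[𝕜] E)) hk (by exact_mod_cast hε k) (hXi k)
  have sum_apply_v : (∑ k ∈ s, (w k : 𝕜) • Xi k) v = ((∑ k ∈ s, |w k| : ℝ) : 𝕜) • v := by
    rw [sum_apply, RCLike.ofReal_sum, Finset.sum_smul]
    refine Finset.sum_congr rfl fun k hk => ?_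
    rw [smul_apply, Xi_apply k hk, smul_smul, ← RCLike.ofReal_mul, hwε]
  calc ∑ k ∈ s, |w k| ≤ ‖((∑ k ∈ s, |w k| : ℝ) : 𝕜)‖ := by
        rw [RCLike.norm_ofReal]; exact le_abs_self _
    _ ≤ ‖∑ k ∈ s, (w k : 𝕜) • Xi k‖ :=
        norm_le_opNorm_of_apply_eq_smul (subsetCharacterSum_ne_zero hb _ s) sum_apply_v

variable [InnerProductSpace 𝕜 E] [CompleteSpace E] {b : HilbertBasis (Finset ι) 𝕜 E}
  {Xi : ι → E →L[𝕜] E}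

theorem isSelfAdjoint_adjacency (hXi : ∀ k σ, Xi k (b σ) = b (symmDiff σ {k})) (w : ι → ℝ) :
    IsSelfAdjoint (∑' k, (w k : 𝕜) • Xi k) := by
  have Xi_star (k : ι) : star (Xi k) = Xi k :=
    isSelfAdjoint_of_involutive_on_basis (symmDiff_left_involutive {k}) (hXi k)
  simp [IsSelfAdjoint, tsum_star, Xi_star]

theorem norm_adjacency_eq_tsum_abs (hXi : ∀ k σ, Xi k (b σ) = b (symmDiff σ {k}))
    {w : ι → ℝ} (hw : Summable w) : ‖∑' k, (w k : 𝕜) • Xi k‖ = ∑' k, |w k| := by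
  have norm_term_le (k : ι) : ‖(w k : 𝕜) • Xi k‖ ≤ |w k| := by
    rw [norm_smul, RCLike.norm_ofReal]
    exact mul_le_of_le_one_right (abs_nonneg _)
      (norm_le_one_of_involutive_on_basis (symmDiff_left_involutive {k}) (hXi k))
  have hA : Summable fun k => (w k : 𝕜) • Xi k := .of_norm_bounded hw.abs norm_term_le
  refine le_antisymm (tsum_of_norm_bounded hw.abs.hasSum norm_term_le) ?_
  exact le_of_tendsto_of_tendsto' hw.abs.hasSum hA.hasSum.norm
    (sum_abs_le_norm_sum_adjacency b.orthonormal.linearIndependent hXi w)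

theorem adjacency_selfAdjoint_norm_general (hXi : ∀ k σ, Xi k (b σ) = b (symmDiff σ {k}))
    {w : ι → ℝ} (hw : Summable w) :
    IsSelfAdjoint (∑' k, (w k : 𝕜) • Xi k) ∧ ‖∑' k, (w k : 𝕜) • Xi k‖ = ∑' k, |w k| :=
  ⟨isSelfAdjoint_adjacency hXi w, norm_adjacency_eq_tsum_abs hXi hw⟩

end Adjacency

/-- The vectors `Z σ` as a Hilbert basis of `H`. -/
def ZBasis : HilbertBasis (Finset ℕ) ℂ H :=
  .ofRepr (.refl ℂ H)

theorem ZBasis_apply (σ : Finset ℕ) : ZBasis σ = Z σ :=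
  (ZBasis.repr_symm_single σ).symm

/-- Theorem 2.1: for a weight `w` on `ℕ`, the `w`-adjacency operator `A_w` is
self-adjoint and `‖A_w‖ = |w| = Σ_k w(k)`. -/
theorem adjacency_selfAdjoint_norm
    (w : ℕ → ℝ) (hw_pos : ∀ k, 0 < w k) (hw_sum : Summable w)
    (Xi : ℕ → H →L[ℂ] H)
    (hXi : ∀ k σ, Xi k (Z σ) = Z (symmDiff σ {k}))
    (A : H →L[ℂ] H) (hA : A = ∑' k, (w k : ℂ) • Xi k) :
    IsSelfAdjoint A ∧ ‖A‖ = ∑' k, w k := by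
  simp only [← ZBasis_apply] at hXi
  simpa [hA, abs_of_pos (hw_pos _)] using adjacency_selfAdjoint_norm_general hXi hw_sum
end
end

section
/- Let w be an ideal weight on ℕ and set B_w := (1/2) • (|w| • I + A_w). Then spec(B_w) = [0, |w|] (as a subset of ℂ), and moreover spec(B_w) equals the closure of {μ_w(σ) : σ ∈ Γ}, the set of values of μ_w over finite subsets of ℕ. -/
noncomputable section

/-!
`B_w = ∑ w k • P k` for the commuting idempotents `P k = (1 + Ξ k) / 2`. Evaluating the characters
of a commutative Banach algebra containing all the `P k`, a spectral value of `B_w` is `∑ c k` with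
`c k` in the spectrum of `w k • P k`, hence in `{0, w k}`; so it is a subsum of `w`. Conversely,
for `s ⊆ ℕ` and finite `F`, some nonzero vector satisfies `P k v = 1_s(k) v` for all `k ∈ F`. It is
annihilated by the `F`-th partial sum of `μ_w(s) • 1 - B_w = ∑ w k • (1_s(k) • 1 - P k)`; if the
limit were invertible then, units being open, so would be some partial sum. Thus the spectrum is
the set of all subsums, for any summable `w`.
-/

theorem closure_finset_sums_eq_closure_subsums {ι E : Type*} [AddCommGroup E] [UniformSpace E]
    [IsUniformAddGroup E] [CompleteSpace E] {w : ι → E} (hw : Summable w) :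
    closure {x | ∃ σ : Finset ι, x = ∑ k ∈ σ, w k} =
      closure {x | ∃ s : Set ι, x = ∑' k : s, w k} := by
  classical
  refine (closure_mono ?_).antisymm (closure_minimal ?_ isClosed_closure)
  · rintro x ⟨σ, rfl⟩
    exact ⟨σ, (Finset.tsum_subtype' σ w).symm⟩
  · rintro x ⟨s, rfl⟩
    have hs : HasSum (s.indicator w) (∑' k : s, w k) := by
      simpa only [tsum_subtype] using (hw.indicator s).hasSum
    refine mem_closure_of_tendsto hs (.of_forall fun F => ⟨F.filter (· ∈ s), ?_⟩)
    exact Finset.sum_indicator_eq_sum_filter F (fun _ => w) (fun _ => s) id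

theorem ofReal_image_closure_finset_sums {ι : Type*} (w : ι → ℝ) :
    Complex.ofReal '' closure {x : ℝ | ∃ σ : Finset ι, x = ∑ k ∈ σ, w k} =
      closure {z : ℂ | ∃ σ : Finset ι, z = ∑ k ∈ σ, (w k : ℂ)} := by
  rw [← Complex.isometry_ofReal.isClosedEmbedding.closure_image_eq]
  congr 1
  ext z
  simp [eq_comm]

section Spectrum

theorem spectrum_coe_centralizer {R A : Type*} [CommRing R] [Ring A] [Algebra R A] {s : Set A}
    (x : Subalgebra.centralizer R s) : spectrum R (x : A) = spectrum R x := by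
  refine (spectrum.subset_subalgebra x).antisymm fun r hr hu => hr ?_
  obtain ⟨u, hu⟩ := hu
  set y : Subalgebra.centralizer R s := algebraMap R _ r - x
  have huy : (u : A) = y := hu
  have hinv : (↑u⁻¹ : A) ∈ Subalgebra.centralizer R s := fun g hg => by
    have hgu : Commute g u := huy ▸ y.2 g hg
    exact hgu.units_inv_right
  exact ⟨⟨y, ⟨_, hinv⟩, Subtype.ext (by simp [← huy]), Subtype.ext (by simp [← huy])⟩, rfl⟩

theorem exists_hasSum_of_mem_spectrum_of_commRing {ι A : Type*} [NormedCommRing A]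
    [NormedAlgebra ℂ A] [CompleteSpace A] {a : ι → A} {b : A} (hb : HasSum a b) {z : ℂ}
    (hz : z ∈ spectrum ℂ b) : ∃ c : ι → ℂ, (∀ k, c k ∈ spectrum ℂ (a k)) ∧ HasSum c z := by
  obtain ⟨f, rfl⟩ := WeakDual.CharacterSpace.mem_spectrum_iff_exists.mp hz
  exact ⟨fun k => f (a k), fun k => WeakDual.CharacterSpace.mem_spectrum_iff_exists.mpr ⟨f, rfl⟩,
    hb.mapL (WeakDual.CharacterSpace.toCLM f)⟩

theorem exists_hasSum_of_mem_spectrum_of_commute {ι A : Type*} [NormedRing A] [NormedAlgebra ℂ A]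
    [CompleteSpace A] {a : ι → A} (ha : ∀ i j, Commute (a i) (a j)) {b : A} (hb : HasSum a b)
    {z : ℂ} (hz : z ∈ spectrum ℂ b) :
    ∃ c : ι → ℂ, (∀ k, c k ∈ spectrum ℂ (a k)) ∧ HasSum c z := by
  -- The bicommutant is commutative, closed and inverse-closed, so passing to it keeps the spectra.
  let S := Subalgebra.centralizer ℂ (Set.range a).centralizer
  let : NormedCommRing S :=
    { (inferInstance : NormedRing S) with
      mul_comm x y := Subtype.ext <|
        Set.centralizer_centralizer_comm_of_comm
          (by rintro _ ⟨i, rfl⟩ _ ⟨j, rfl⟩; exact ha i j) _ x.2 _ y.2 }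
  have : CompleteSpace S := (Set.isClosed_centralizer _).completeSpace_coe
  have haS (k : ι) : a k ∈ S := Set.subset_centralizer_centralizer ⟨k, rfl⟩
  have hbS : b ∈ S :=
    (Set.isClosed_centralizer _).mem_of_tendsto hb (.of_forall fun F => S.sum_mem fun k _ => haS k)
  have hbS' : HasSum (fun k => (⟨a k, haS k⟩ : S)) ⟨b, hbS⟩ :=
    (Topology.IsInducing.subtypeVal.hasSum_iff (g := S.subtype) _ _).mp hb
  obtain ⟨c, hc, hcz⟩ := exists_hasSum_of_mem_spectrum_of_commRing hbS'
    (spectrum_coe_centralizer (⟨b, hbS⟩ : S) ▸ hz)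
  exact ⟨c, fun k => (spectrum_coe_centralizer (⟨a k, haS k⟩ : S)).symm ▸ hc k, hcz⟩

theorem mem_spectrum_of_hasSum_of_eigenvectors {ι 𝕜 E : Type*} [NontriviallyNormedField 𝕜]
    [NormedAddCommGroup E] [NormedSpace 𝕜 E] [CompleteSpace E] {T : ι → E →L[𝕜] E}
    {S : E →L[𝕜] E} (hS : HasSum T S) {c : ι → 𝕜} {z : 𝕜} (hz : HasSum c z)
    (hv : ∀ F : Finset ι, ∃ v ≠ 0, ∀ k ∈ F, T k v = c k • v) : z ∈ spectrum 𝕜 S := by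
  intro hunit
  have hdiff : HasSum (fun k => algebraMap 𝕜 (E →L[𝕜] E) (c k) - T k)
      (algebraMap 𝕜 (E →L[𝕜] E) z - S) :=
    (hz.map (algebraMap 𝕜 (E →L[𝕜] E)) (continuous_algebraMap 𝕜 _)).sub hS
  obtain ⟨F, u, hu⟩ :=
    (hdiff.eventually (Units.isOpen.mem_nhds hunit)).exists
  obtain ⟨v, hv0, hvF⟩ := hv F
  have huv : (u : E →L[𝕜] E) v = 0 := by
    rw [hu, sum_apply]
    refine Finset.sum_eq_zero fun k hk => ?_
    simp [hvF k hk, Algebra.algebraMap_eq_smul_one]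
  apply hv0
  calc v = (↑u⁻¹ * ↑u : E →L[𝕜] E) v := by rw [u.inv_mul, one_apply_eq_self]
    _ = 0 := by rw [mul_apply_eq_comp, huv, map_zero]

end Spectrum

section Idempotents

variable {𝕜 A : Type*} [Field 𝕜] [Ring A] [Algebra 𝕜 A]

theorem isIdempotentElem_half_one_add [NeZero (2 : 𝕜)] {x : A} (hx : x * x = 1) :
    IsIdempotentElem ((2⁻¹ : 𝕜) • (1 + x)) := by
  have hsq : (1 + x) * (1 + x) = (2 : 𝕜) • (1 + x) := by
    rw [mul_add, add_mul, add_mul, hx, two_smul]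
    simp only [one_mul, mul_one]
    abel
  rw [IsIdempotentElem, smul_mul_smul_comm, hsq, smul_smul, mul_assoc,
    inv_mul_cancel₀ (NeZero.ne (2 : 𝕜)), mul_one]

open Polynomial in
theorem spectrum_smul_subset_of_isIdempotentElem {p : A} (hp : IsIdempotentElem p) (r : 𝕜) :
    spectrum 𝕜 (r • p) ⊆ {0, r} := by
  nontriviality A
  intro c hc
  have hzero : c ^ 2 - r * c = 0 := by
    have hmem := spectrum.subset_polynomial_aeval (r • p) (X ^ 2 - C r * X) ⟨c, hc, rfl⟩
    simpa [pow_two, hp.eq, smul_smul, ← Algebra.smul_def] using hmem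
  have hfactor : c * (c - r) = 0 := by linear_combination hzero
  exact (mul_eq_zero.mp hfactor).imp id sub_eq_zero.mp

end Idempotents

section Walsh

variable {ι R M : Type*} [CommRing R] [AddCommGroup M] [Module R M] {b : Finset ι → M}
  {ε : ι → R}

theorem prod_symmDiff_of_mul_self_eq_one {N : Type*} [CommMonoid N] [DecidableEq ι] {f : ι → N}
    (hf : ∀ k, f k * f k = 1) (σ τ : Finset ι) :
    ∏ k ∈ symmDiff σ τ, f k = (∏ k ∈ σ, f k) * ∏ k ∈ τ, f k := by
  have hinter : (∏ k ∈ σ ∩ τ, f k) * ∏ k ∈ σ ∩ τ, f k = 1 := by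
    simp only [← Finset.prod_mul_distrib, hf, Finset.prod_const_one]
  rw [Finset.symmDiff_def, Finset.prod_union disjoint_sdiff_sdiff,
    ← Finset.prod_inter_mul_prod_sdiff σ τ f, ← Finset.prod_inter_mul_prod_sdiff τ σ f,
    Finset.inter_comm τ σ, mul_mul_mul_comm, hinter, one_mul]

/-- The Walsh vector with signs `ε` supported on the subsets of `F`: its coefficients with respect
to the family `b` are the values of the character `τ ↦ ∏ j ∈ τ, ε j` of `(Finset ι, ∆)`. It is a
joint eigenvector of the maps toggling a point of `F`. -/
def walshVector (b : Finset ι → M) (ε : ι → R) (F : Finset ι) : M :=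
  ∑ τ ∈ F.powerset, (∏ j ∈ τ, ε j) • b τ

theorem walshVector_ne_zero [Nontrivial R] (hb : LinearIndependent R b) (ε : ι → R)
    (F : Finset ι) : walshVector b ε F ≠ 0 := fun h =>
  one_ne_zero (α := R) <| Finset.prod_empty (f := ε) ▸
    linearIndependent_iff'.mp hb F.powerset _ h ∅ (Finset.empty_mem_powerset F)

theorem map_walshVector [DecidableEq ι] (hε : ∀ k, ε k * ε k = 1) {k : ι} {X : M →ₗ[R] M}
    (hX : ∀ σ, X (b σ) = b (symmDiff σ {k})) {F : Finset ι} (hk : k ∈ F) :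
    X (walshVector b ε F) = ε k • walshVector b ε F := by
  have hmem (τ) (hτ : τ ∈ F.powerset) : symmDiff τ {k} ∈ F.powerset :=
    Finset.mem_powerset.mpr <| Finset.symmDiff_subset_union.trans <|
      Finset.union_subset (Finset.mem_powerset.mp hτ) (Finset.singleton_subset_iff.mpr hk)
  have htoggle (τ : Finset ι) : symmDiff (symmDiff τ {k}) {k} = τ :=
    symmDiff_symmDiff_cancel_right ..
  rw [walshVector, map_sum, Finset.smul_sum]
  refine Finset.sum_nbij' (symmDiff · {k}) (symmDiff · {k}) hmem hmem (fun τ _ => htoggle τ)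
    (fun τ _ => htoggle τ) fun τ _ => ?_
  rw [map_smul, hX, prod_symmDiff_of_mul_self_eq_one hε, Finset.prod_singleton, smul_smul,
    mul_left_comm, hε, mul_one]

end Walsh

section HilbertBasis

variable {ι 𝕜 E F : Type*} [RCLike 𝕜] [NormedAddCommGroup E] [InnerProductSpace 𝕜 E]
  [NormedAddCommGroup F]

theorem clm_ext_of_hilbertBasis [NormedSpace 𝕜 F] (b : HilbertBasis ι 𝕜 E)
    {S T : E →L[𝕜] F} (h : ∀ i, S (b i) = T (b i)) : S = T :=
  ContinuousLinearMap.ext_on (Submodule.dense_iff_topologicalClosure_eq_top.mpr b.dense_span)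
    (Set.eqOn_range.mpr (funext h))

theorem norm_map_of_orthonormal_comp_hilbertBasis [InnerProductSpace 𝕜 F] [CompleteSpace F]
    (b : HilbertBasis ι 𝕜 E) {T : E →L[𝕜] F} (hT : Orthonormal 𝕜 (T ∘ b)) (x : E) :
    ‖T x‖ = ‖x‖ := by
  have hTx : T x = hT.orthogonalFamily.linearIsometry (b.repr x) :=
    ((b.hasSum_repr x).mapL T).unique <| by
      simpa using hT.orthogonalFamily.hasSum_linearIsometry (b.repr x)
  rw [hTx, LinearIsometry.norm_map, LinearIsometryEquiv.norm_map]

end HilbertBasis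

section Toggles

variable {ι 𝕜 E : Type*} [RCLike 𝕜] [DecidableEq ι] [NormedAddCommGroup E]
  [InnerProductSpace 𝕜 E] {b : HilbertBasis (Finset ι) 𝕜 E} {X : ι → E →L[𝕜] E}
  (hX : ∀ k σ, X k (b σ) = b (symmDiff σ {k}))
include hX

theorem toggle_mul_self (k : ι) : X k * X k = 1 :=
  clm_ext_of_hilbertBasis b fun σ => by simp [hX]

theorem commute_toggle (j k : ι) : Commute (X j) (X k) :=
  clm_ext_of_hilbertBasis b fun σ => by
    simp only [mul_apply_eq_comp, hX, symmDiff_right_comm]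

theorem norm_toggle_le_one [CompleteSpace E] (k : ι) : ‖X k‖ ≤ 1 := by
  have horth : Orthonormal 𝕜 (X k ∘ b) := by
    rw [show X k ∘ b = b ∘ (symmDiff · {k}) from funext (hX k)]
    exact b.orthonormal.comp _ (symmDiff_left_injective _)
  refine (X k).opNorm_le_bound zero_le_one fun x => ?_
  rw [norm_map_of_orthonormal_comp_hilbertBasis b horth, one_mul]

theorem summable_smul_toggle [CompleteSpace E] {w : ι → 𝕜} (hw : Summable w) :
    Summable fun k => w k • X k :=
  .of_norm_bounded hw.norm fun k => by
    rw [norm_smul]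
    exact mul_le_of_le_one_right (norm_nonneg _) (norm_toggle_le_one hX k)

theorem exists_joint_eigenvector_toggle {ε : ι → 𝕜} (hε : ∀ k, ε k * ε k = 1) (F : Finset ι) :
    ∃ v ≠ 0, ∀ k ∈ F, X k v = ε k • v :=
  ⟨walshVector b ε F, walshVector_ne_zero b.orthonormal.linearIndependent ε F, fun k hk =>
    map_walshVector hε (X := (X k : E →ₗ[𝕜] E)) (hX k) hk⟩

theorem mem_spectrum_of_hasSum_indicator [CompleteSpace E] {w : ι → 𝕜} {B : E →L[𝕜] E}
    (hB : HasSum (fun k => w k • (2⁻¹ : 𝕜) • (1 + X k)) B) {s : Set ι} {z : 𝕜}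
    (hz : HasSum (s.indicator w) z) : z ∈ spectrum 𝕜 B := by
  classical
  let ε (k : ι) : 𝕜 := if k ∈ s then 1 else -1
  have hε (k : ι) : ε k * ε k = 1 := by by_cases hk : k ∈ s <;> simp [ε, hk]
  refine mem_spectrum_of_hasSum_of_eigenvectors hB hz fun F => ?_
  obtain ⟨v, hv, hXv⟩ := exists_joint_eigenvector_toggle hX hε F
  refine ⟨v, hv, fun k hk => ?_⟩
  have hTv : (w k • (2⁻¹ : 𝕜) • (1 + X k)) v = w k • (2⁻¹ : 𝕜) • (v + ε k • v) := by
    rw [← hXv k hk]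
    rfl
  rw [hTv]
  by_cases hks : k ∈ s
  · simp only [ε, if_pos hks, Set.indicator_of_mem hks]
    module
  · simp only [ε, if_neg hks, Set.indicator_of_notMem hks]
    module

end Toggles

theorem exists_hasSum_indicator_of_mem_spectrum {ι E : Type*} [DecidableEq ι]
    [NormedAddCommGroup E] [InnerProductSpace ℂ E] [CompleteSpace E]
    {b : HilbertBasis (Finset ι) ℂ E} {X : ι → E →L[ℂ] E}
    (hX : ∀ k σ, X k (b σ) = b (symmDiff σ {k})) {w : ι → ℂ} {B : E →L[ℂ] E}
    (hB : HasSum (fun k => w k • (2⁻¹ : ℂ) • (1 + X k)) B) {z : ℂ} (hz : z ∈ spectrum ℂ B) :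
    ∃ s : Set ι, HasSum (s.indicator w) z := by
  have hcomm (j k : ι) : Commute (w j • (2⁻¹ : ℂ) • (1 + X j)) (w k • (2⁻¹ : ℂ) • (1 + X k)) :=
    have hjk : Commute (1 + X j) (1 + X k) :=
      (Commute.one_left _).add_left ((Commute.one_right _).add_right (commute_toggle hX j k))
    ((hjk.smul_left _).smul_right _ |>.smul_left _).smul_right _
  obtain ⟨c, hc, hcz⟩ := exists_hasSum_of_mem_spectrum_of_commute hcomm hB hz
  have hc' (k : ι) : c k = 0 ∨ c k = w k :=
    spectrum_smul_subset_of_isIdempotentElem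
      (isIdempotentElem_half_one_add (toggle_mul_self hX k)) (w k) (hc k)
  have hind : {k | c k = w k}.indicator w = c := by
    ext k
    simp only [Set.indicator_apply, Set.mem_ofPred_eq]
    split_ifs with hk
    · exact hk.symm
    · exact ((hc' k).resolve_right hk).symm
  exact ⟨_, hind ▸ hcz⟩

theorem spectrum_B_of_ideal_general {ι E : Type*} [DecidableEq ι] [NormedAddCommGroup E]
    [InnerProductSpace ℂ E] [CompleteSpace E] (b : HilbertBasis (Finset ι) ℂ E) {w : ι → ℂ}
    (hw : Summable w) {X : ι → E →L[ℂ] E} (hX : ∀ k σ, X k (b σ) = b (symmDiff σ {k}))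
    {A B : E →L[ℂ] E} (hA : A = ∑' k, w k • X k)
    (hB : B = (2⁻¹ : ℂ) • ((∑' k, w k) • (1 : E →L[ℂ] E) + A)) :
    spectrum ℂ B = {z | ∃ s : Set ι, z = ∑' k : s, w k} ∧
      spectrum ℂ B = closure {z | ∃ σ : Finset ι, z = ∑ k ∈ σ, w k} := by
  have hBsum : HasSum (fun k => w k • (2⁻¹ : ℂ) • (1 + X k)) B := by
    have hsum := ((hw.hasSum.smul_const (1 : E →L[ℂ] E)).add
      (summable_smul_toggle hX hw).hasSum).const_smul (2⁻¹ : ℂ)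
    rw [← hA, ← hB] at hsum
    simpa only [← smul_add, smul_comm (2⁻¹ : ℂ)] using hsum
  have hsub : spectrum ℂ B = {z | ∃ s : Set ι, z = ∑' k : s, w k} := by
    ext z
    constructor
    · intro hz
      obtain ⟨s, hs⟩ := exists_hasSum_indicator_of_mem_spectrum hX hBsum hz
      exact ⟨s, by rw [tsum_subtype, hs.tsum_eq]⟩
    · rintro ⟨s, rfl⟩
      rw [tsum_subtype]
      exact mem_spectrum_of_hasSum_indicator hX hBsum (hw.indicator s).hasSum
  exact ⟨hsub, by rw [closure_finset_sums_eq_closure_subsums hw, ← hsub,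
    (spectrum.isClosed B).closure_eq]⟩

/-- The vectors `Z σ` as a Hilbert basis of `H`. -/
def zBasis : HilbertBasis (Finset ℕ) ℂ H := .ofRepr (.refl ℂ H)

theorem zBasis_apply (σ : Finset ℕ) : zBasis σ = Z σ :=
  (zBasis.repr_symm_single σ).symm

/-- Corollary 3.3: if the weight `w` is ideal then, with `B_w = (|w| I + A_w)/2`,
`spec(B_w) = [0, |w|]` and it also equals the closure of `{μ_w(σ) : σ ∈ Γ}`. -/
theorem spectrum_B_of_ideal
    (w : ℕ → ℝ) (hw_pos : ∀ k, 0 < w k) (hw_sum : Summable w)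
    (hw_ideal :
      closure {x : ℝ | ∃ s : Set ℕ, x = ∑' k : s, w k} = Set.Icc 0 (∑' k, w k))
    (Xi : ℕ → H →L[ℂ] H)
    (hXi : ∀ k σ, Xi k (Z σ) = Z (symmDiff σ {k}))
    (A : H →L[ℂ] H) (hA : A = ∑' k, (w k : ℂ) • Xi k)
    (B : H →L[ℂ] H)
    (hB : B = (2⁻¹ : ℂ) • (((∑' k, w k : ℝ) : ℂ) • (1 : H →L[ℂ] H) + A)) :
    spectrum ℂ B = Complex.ofReal '' Set.Icc 0 (∑' k, w k) ∧
    spectrum ℂ B =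
      Complex.ofReal '' closure {x : ℝ | ∃ σ : Finset ℕ, x = ∑ k ∈ σ, w k} := by
  have hspec : spectrum ℂ B = Complex.ofReal '' closure {x | ∃ σ : Finset ℕ, x = ∑ k ∈ σ, w k} :=
    ofReal_image_closure_finset_sums w ▸ (spectrum_B_of_ideal_general zBasis
      (Complex.summable_ofReal.mpr hw_sum) (by simpa only [zBasis_apply] using hXi) hA
      (Complex.ofReal_tsum w ▸ hB)).2
  exact ⟨by rw [hspec, closure_finset_sums_eq_closure_subsums hw_sum, hw_ideal], hspec⟩
end
end
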